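/- Let θ be a cylindric diagram in C_ω. The correspondence x ↦ hk(x) is a bijection from θ onto D(P_θ) = {α ∈ R₊ : ⟨P_θ, α^∨⟩ = −1}. In particular, hk(x) is a positive real root for every x ∈ θ. -/

import Mathlib

/-!
Write `κ = m + ℓ`. The diagram `θ` is encoded by its boundary profile `A : ℤ → ℤ`, where `A c` is
the largest `a` such that the cell `(a, a + c)` of content `c` lies over `θ`. Being an order filter
means that each descent `ε c = A c - A (c + 1)` is `0` or `1`, and invariance under `ω` means
`A (c + κ) = A c - m`, so that `ε` is `κ`-periodic (`exists_profile`).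

The positive real roots are exactly the sums `∑_{i < k ≤ j} α_k` (indices mod `κ`) with `i < j` and
`i ≢ j` mod `κ`, and the pair `(i, j)` is unique up to a common translation by `κ`
(`mem_Rpos_iff`, `rt_inj`): the simple reflection `s_r` acts on the pair `(i, j)` by the affine
permutation that exchanges `n` and `n + 1` for all `n + 1 ≡ r`.

The coefficient of `Λ_c` in `P_θ` is `ε (c - 1) - ε c` (`IsProfile.aC_eq`), so the pairing of `P_θ`
with the root of `(i, j)` telescopes to `ε i - ε j` (`IsProfile.pairP_rt`). Hence `D(P_θ)`
corresponds to the pairs `i < j` with `ε i = 0` and `ε j = 1`, up to translation.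

Descents `ε j = 1` index the rows of the lifted diagram (by the content `j` of the last cell of the
row) and flat steps `ε i = 0` index its columns (by the content `i + 1` of the last cell of the
column). The row and the column cross in a cell of the diagram exactly when `i < j`, and the hook
at that cell runs through the contents `i + 1, …, j` (`IsProfile.hk_eq`). So the hook map is the
bijection between cells and pairs.
-/

namespace CylPaper

/-! ## The cylinder and its order -/

abbrev Z2 : Type := ℤ × ℤ

/-- The partial order on ℤ²: (a,b) ≤ (c,d) iff a ≥ c and b ≥ d. -/
def le2 (x y : Z2) : Prop := y.1 ≤ x.1 ∧ y.2 ≤ x.2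

/-- The period ω = (m, -ℓ). -/
def om (m l : ℕ) : Z2 := ((m : ℤ), -(l : ℤ))

/-- The cylinder C_ω = ℤ²/ℤω. -/
abbrev Cyl (m l : ℕ) : Type := Z2 ⧸ AddSubgroup.zmultiples (om m l)

/-- The natural projection π : ℤ² → C_ω. -/
def pr (m l : ℕ) : Z2 →+ Cyl m l := QuotientAddGroup.mk' _

/-- The induced order relation on the cylinder: x ≤ y iff there are lifts with x̃ ≤ ỹ. -/
def cle (m l : ℕ) (x y : Cyl m l) : Prop :=
  ∃ a b : Z2, pr m l a = x ∧ pr m l b = y ∧ le2 a b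

/-- A cylindric diagram: a non-trivial order filter of C_ω. -/
def IsCylindric (m l : ℕ) (θ : Set (Cyl m l)) : Prop :=
  θ.Nonempty ∧ θ ≠ Set.univ ∧ ∀ x ∈ θ, ∀ y, cle m l x y → y ∈ θ

/-- A periodic diagram of period ω: a non-trivial order filter of ℤ² with Θ + ω = Θ. -/
def IsPeriodic (m l : ℕ) (Θ : Set Z2) : Prop :=
  Θ.Nonempty ∧ Θ ≠ Set.univ ∧ (∀ x ∈ Θ, ∀ y, le2 x y → y ∈ Θ) ∧
    (fun p => p + om m l) '' Θ = Θ

/-- A proper order ideal ξ of the sub-poset θ of C_ω. -/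
def IsProperIdealOf (m l : ℕ) (θ ξ : Set (Cyl m l)) : Prop :=
  ξ ⊆ θ ∧ ξ ≠ θ ∧ ∀ x ∈ ξ, ∀ y ∈ θ, cle m l y x → y ∈ ξ

/-- A proper order ideal of the whole cylinder C_ω. -/
def IsProperIdealC (m l : ℕ) (J : Set (Cyl m l)) : Prop :=
  J ≠ Set.univ ∧ ∀ x ∈ J, ∀ y, cle m l y x → y ∈ J

/-- A proper order filter of the whole cylinder C_ω. -/
def IsProperFilterC (m l : ℕ) (J : Set (Cyl m l)) : Prop :=
  J ≠ Set.univ ∧ ∀ x ∈ J, ∀ y, cle m l x y → y ∈ J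

/-! ## The content map -/

/-- The content on ℤ²: (a,b) ↦ b - a mod κ (κ = m + ℓ). -/
def conHom (m l : ℕ) : Z2 →+ ZMod (m + l) where
  toFun p := ((p.2 - p.1 : ℤ) : ZMod (m + l))
  map_zero' := by simp
  map_add' a b := by
    simp only [Prod.fst_add, Prod.snd_add]
    push_cast
    ring

lemma conHom_om (m l : ℕ) : conHom m l (om m l) = 0 := by
  have h : ((m + l : ℕ) : ZMod (m + l)) = 0 := ZMod.natCast_self _
  show ((((om m l).2 - (om m l).1 : ℤ)) : ZMod (m + l)) = 0
  simp only [om]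
  push_cast at h ⊢
  linear_combination -h

/-- The content map con : C_ω → ℤ/κℤ. -/
def con (m l : ℕ) : Cyl m l →+ ZMod (m + l) :=
  QuotientAddGroup.lift _ (conHom m l) (by
    intro x hx
    obtain ⟨k, rfl⟩ := AddSubgroup.mem_zmultiples_iff.mp hx
    simp only [AddMonoidHom.mem_ker, map_zsmul, conHom_om, smul_zero])

/-! ## The affine root system of type A_{κ-1}^{(1)} -/

/-- h*, with coordinates in the basis {α_i (i ∈ ℤ/κℤ), Λ₀}:
`(c, t)` stands for `Σ_i c_i α_i + t Λ₀`. -/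
abbrev Hw (κ : ℕ) : Type := (ZMod κ → ℚ) × ℚ

/-- The affine Cartan matrix of type A_{κ-1}^{(1)} (valid for κ ≥ 2). -/
def cartan (κ : ℕ) (i j : ZMod κ) : ℚ :=
  (if i = j then 2 else 0) + (if i - j = 1 then -1 else 0) + (if i - j = -1 then -1 else 0)

/-- The simple root α_i. -/
def alphaR (κ : ℕ) (i : ZMod κ) : Hw κ := (Pi.single i 1, 0)

/-- The null root δ = Σ_i α_i. -/
def deltaR (κ : ℕ) : Hw κ := (fun _ => 1, 0)

/-- The pairing ⟨ζ, α_i^∨⟩. -/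
noncomputable def pairSimple (κ : ℕ) (ζ : Hw κ) (i : ZMod κ) : ℚ :=
  (∑ᶠ j, ζ.1 j * cartan κ i j) + ζ.2 * (if i = 0 then 1 else 0)

/-- The pairing ⟨ζ, β^∨⟩ where β = Σ_i k_i α_i lies in the root lattice,
so β^∨ = Σ_i k_i α_i^∨. -/
noncomputable def pairCo (κ : ℕ) (ζ β : Hw κ) : ℚ := ∑ᶠ i, β.1 i * pairSimple κ ζ i

/-- The simple reflection s_i : ζ ↦ ζ - ⟨ζ, α_i^∨⟩ α_i, as a map on h*. -/
noncomputable def sFun (κ : ℕ) (i : ZMod κ) (ζ : Hw κ) : Hw κ :=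
  ζ - pairSimple κ ζ i • alphaR κ i

/-- The element s_{i₁} s_{i₂} ⋯ s_{i_r} of the affine Weyl group
given by a word [i₁, i₂, …, i_r]. -/
noncomputable def wordProd (κ : ℕ) (L : List (ZMod κ)) : Hw κ → Hw κ :=
  (L.map (sFun κ)).foldr (· ∘ ·) id

/-- Membership in the affine Weyl group W (generated by the s_i). -/
def Wmem (κ : ℕ) (w : Hw κ → Hw κ) : Prop := ∃ L : List (ZMod κ), wordProd κ L = w

/-- The Coxeter length: the least r such that w is a product of r simple reflections. -/
noncomputable def len (κ : ℕ) (w : Hw κ → Hw κ) : ℕ :=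
  sInf {r : ℕ | ∃ L : List (ZMod κ), L.length = r ∧ wordProd κ L = w}

/-- Q₊ = Σ_i ℤ≥0 α_i. -/
def QPos (κ : ℕ) : Set (Hw κ) := {x | x.2 = 0 ∧ ∀ i, ∃ n : ℕ, x.1 i = (n : ℚ)}

/-- The set R = WΠ of real roots. -/
def Rset (κ : ℕ) : Set (Hw κ) :=
  {β | ∃ (L : List (ZMod κ)) (i : ZMod κ), β = wordProd κ L (alphaR κ i)}

/-- Positive real roots R₊ = R ∩ Q₊. -/
def Rpos (κ : ℕ) : Set (Hw κ) := Rset κ ∩ QPos κ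

/-- Negative real roots R₋ = -R₊. -/
def Rneg (κ : ℕ) : Set (Hw κ) := {β | -β ∈ Rpos κ}

/-- The inversion set R(w) = R₊ ∩ w R₋. -/
def invSet (κ : ℕ) (w : Hw κ → Hw κ) : Set (Hw κ) := Rpos κ ∩ (w '' Rneg κ)

/-- The weak right Bruhat order on W. -/
def wble (κ : ℕ) (v w : Hw κ → Hw κ) : Prop :=
  Relation.ReflTransGen
    (fun u u' => ∃ i : ZMod κ, u' = u ∘ sFun κ i ∧ len κ u' = len κ u + 1) v w

/-- The weak Bruhat interval [e, w]. -/
def bint (κ : ℕ) (w : Hw κ → Hw κ) : Set (Hw κ → Hw κ) :=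
  {x | wble κ id x ∧ wble κ x w}

/-- A single commutation move on words: swap adjacent letters i, j with i - j ≠ 0, ±1. -/
def CommMove (κ : ℕ) (L1 L2 : List (ZMod κ)) : Prop :=
  ∃ (u v : List (ZMod κ)) (i j : ZMod κ),
    i - j ≠ 0 ∧ i - j ≠ 1 ∧ i - j ≠ -1 ∧
    L1 = u ++ i :: j :: v ∧ L2 = u ++ j :: i :: v

/-- A word is reduced if its length equals the Coxeter length of its product. -/
def IsReducedWord (κ : ℕ) (L : List (ZMod κ)) : Prop :=
  len κ (wordProd κ L) = L.length

/-- Fully commutative: any reduced word for w can be obtained from any other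
using only commutation moves. -/
def FullyComm (κ : ℕ) (w : Hw κ → Hw κ) : Prop :=
  ∀ L1 L2 : List (ZMod κ),
    IsReducedWord κ L1 → wordProd κ L1 = w →
    IsReducedWord κ L2 → wordProd κ L2 = w →
    Relation.ReflTransGen (CommMove κ) L1 L2

/-! ## Hooks, bottom set and weights attached to a cylindric diagram -/

/-- α(x) = α_{con(x)}. -/
def alC (m l : ℕ) (x : Cyl m l) : Hw (m + l) := alphaR (m + l) (con m l x)

/-- arm(x) = {x + π(0,k) : k ≥ 1} ∩ θ. -/
def armSet (m l : ℕ) (θ : Set (Cyl m l)) (x : Cyl m l) : Set (Cyl m l) :=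
  {y | y ∈ θ ∧ ∃ k : ℕ, 1 ≤ k ∧ y = x + pr m l (0, (k : ℤ))}

/-- leg(x) = {x + π(k,0) : k ≥ 1} ∩ θ. -/
def legSet (m l : ℕ) (θ : Set (Cyl m l)) (x : Cyl m l) : Set (Cyl m l) :=
  {y | y ∈ θ ∧ ∃ k : ℕ, 1 ≤ k ∧ y = x + pr m l ((k : ℤ), 0)}

/-- The colored hook length hk(x) = α(x) + Σ_{y∈arm(x)} α(y) + Σ_{y∈leg(x)} α(y). -/
noncomputable def hk (m l : ℕ) (θ : Set (Cyl m l)) (x : Cyl m l) : Hw (m + l) :=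
  alC m l x + (∑ᶠ y ∈ armSet m l θ x, alC m l y) + (∑ᶠ y ∈ legSet m l θ x, alC m l y)

/-- x is the minimum cell b_i of content i in θ. -/
def IsBottomCell (m l : ℕ) (θ : Set (Cyl m l)) (i : ZMod (m + l)) (x : Cyl m l) : Prop :=
  x ∈ θ ∧ con m l x = i ∧ ∀ y ∈ θ, con m l y = i → cle m l x y

/-- The bottom set Γ = {b_i : i ∈ ℤ/κℤ}. -/
def btm (m l : ℕ) (θ : Set (Cyl m l)) : Set (Cyl m l) :=
  {x | ∃ i, IsBottomCell m l θ i x}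

/-- The maximal elements Γ_max of the bottom set. -/
def btmMax (m l : ℕ) (θ : Set (Cyl m l)) : Set (Cyl m l) :=
  {x | x ∈ btm m l θ ∧ ∀ y ∈ btm m l θ, cle m l x y → y = x}

/-- The minimal elements Γ_min of the bottom set. -/
def btmMin (m l : ℕ) (θ : Set (Cyl m l)) : Set (Cyl m l) :=
  {x | x ∈ btm m l θ ∧ ∀ y ∈ btm m l θ, cle m l y x → y = x}

open Classical in
/-- The coefficient a_i of Λ_i in the predominant weight P_θ:
1 if b_i ∈ Γ_max, -1 if b_i ∈ Γ_min, 0 otherwise. -/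
noncomputable def aC (m l : ℕ) (θ : Set (Cyl m l)) (i : ZMod (m + l)) : ℚ :=
  if ∃ x, IsBottomCell m l θ i x ∧ x ∈ btmMax m l θ then 1
  else if ∃ x, IsBottomCell m l θ i x ∧ x ∈ btmMin m l θ then -1 else 0

/-- The pairing ⟨P_θ, β^∨⟩ = Σ_i a_i k_i for β = Σ_i k_i α_i,
where P_θ = Σ_i a_i Λ_i (since ⟨Λ_i, α_j^∨⟩ = δ_{ij} and ⟨Λ_i, d⟩ = 0). -/
noncomputable def pairP (m l : ℕ) (θ : Set (Cyl m l)) (β : Hw (m + l)) : ℚ :=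
  ∑ᶠ i, aC m l θ i * β.1 i

/-- D(P_θ) = {α ∈ R₊ : ⟨P_θ, α^∨⟩ = -1}. -/
def DSet (m l : ℕ) (θ : Set (Cyl m l)) : Set (Hw (m + l)) :=
  {β | β ∈ Rpos (m + l) ∧ pairP m l θ β = -1}

/-- The "inversion set" R(w_θ) = {hk(x) : x ∈ θ}. -/
def RwTheta (m l : ℕ) (θ : Set (Cyl m l)) : Set (Hw (m + l)) := hk m l θ '' θ

/-- The set Π_θ = Π_θ^0 ∪ Π_θ^arm ∪ Π_θ^leg. -/
def PiTheta (m l : ℕ) (θ : Set (Cyl m l)) : Set (Hw (m + l)) :=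
  {v | ∃ x, x ∈ btm m l θ ∧ x ∉ btmMax m l θ ∧ x ∉ btmMin m l θ ∧ v = alC m l x} ∪
  {v | ∃ x, x ∈ btmMax m l θ ∧ v = alC m l x + ∑ᶠ y ∈ armSet m l θ x, alC m l y} ∪
  {v | ∃ x, x ∈ btmMax m l θ ∧ v = alC m l x + ∑ᶠ y ∈ legSet m l θ x, alC m l y}

/-- The modified order ⊴ on R(w_θ): α ⊴ β iff β - α ∈ Σ_{γ∈Π_θ} ℤ≥0 γ. -/
def trile (m l : ℕ) (θ : Set (Cyl m l)) (α β : Hw (m + l)) : Prop :=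
  β - α ∈ AddSubmonoid.closure (PiTheta m l θ)

/-! ## Standard tableaux (encoded by the inverse enumeration e = T⁻¹ : ℤ≥1 → θ) -/

/-- A standard tableau on θ, given by the enumeration e = T⁻¹ : {1,2,…} → θ.
This is precisely the data of an order-preserving bijection T : θ → ℤ≥1. -/
def IsTableau (m l : ℕ) (θ : Set (Cyl m l)) (e : ℕ → Cyl m l) : Prop :=
  Set.InjOn e {a : ℕ | 1 ≤ a} ∧ e '' {a : ℕ | 1 ≤ a} = θ ∧
  ∀ a b : ℕ, 1 ≤ a → 1 ≤ b → cle m l (e a) (e b) → e a ≠ e b → a < b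

/-- A standard tableau on a finite (skew) diagram ξ with |ξ| = n, encoded by
the enumeration e = S⁻¹ : {1,…,n} → ξ. -/
def IsTableauOn (m l : ℕ) (ξ : Set (Cyl m l)) (n : ℕ) (e : ℕ → Cyl m l) : Prop :=
  Set.InjOn e (Set.Icc 1 n) ∧ e '' Set.Icc 1 n = ξ ∧
  ∀ a b : ℕ, a ∈ Set.Icc 1 n → b ∈ Set.Icc 1 n → cle m l (e a) (e b) → e a ≠ e b → a < b

/-- The word (con(e 1), con(e 2), …, con(e n)). -/
def tabWord (m l : ℕ) (e : ℕ → Cyl m l) (n : ℕ) : List (ZMod (m + l)) :=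
  (List.range n).map (fun k => con m l (e (k + 1)))

/-- The semi-infinite Bruhat interval [e, w_{θ,T}) = ⋃_{n≥1} [e, w_{θ,T}[n]]. -/
def semiInt (m l : ℕ) (e : ℕ → Cyl m l) : Set (Hw (m + l) → Hw (m + l)) :=
  ⋃ n ∈ {n : ℕ | 1 ≤ n}, bint (m + l) (wordProd (m + l) (tabWord m l e n))

/-- w is P_θ-pluscule: ⟨P_θ, α^∨⟩ = -1 for every α ∈ R(w). -/
def Pluscule (m l : ℕ) (θ : Set (Cyl m l)) (w : Hw (m + l) → Hw (m + l)) : Prop :=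
  ∀ β ∈ invSet (m + l) w, pairP m l θ β = -1

/-- The generating relation of the heap order ⪯_T on ℤ≥1. -/
def heapRel (m l : ℕ) (e : ℕ → Cyl m l) (a b : ℕ) : Prop :=
  1 ≤ a ∧ a ≤ b ∧
    (con m l (e a) = con m l (e b) ∨
      sFun (m + l) (con m l (e a)) ∘ sFun (m + l) (con m l (e b)) ≠
        sFun (m + l) (con m l (e b)) ∘ sFun (m + l) (con m l (e a)))

/-- The generating relation of the heap order ≤^hp on R(w_θ):
α ≤ β whenever β - α ∈ Q₊ (the ordinary order) and ⟨α, β^∨⟩ ≠ 0. -/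
def hpRel (m l : ℕ) (θ : Set (Cyl m l)) (α β : Hw (m + l)) : Prop :=
  α ∈ RwTheta m l θ ∧ β ∈ RwTheta m l θ ∧ β - α ∈ QPos (m + l) ∧
    pairCo (m + l) α β ≠ 0

/-- v is the Weyl group element w_ξ of a proper order ideal ξ of θ. -/
def IsIdealWord (m l : ℕ) (θ ξ : Set (Cyl m l)) (v : Hw (m + l) → Hw (m + l)) : Prop :=
  IsProperIdealOf m l θ ξ ∧
    ∃ n e, IsTableauOn m l ξ n e ∧ v = wordProd (m + l) (tabWord m l e n)

/-- A proper order ideal of the poset (R(w_θ), ⊴). -/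
def IsProperIdealOfRw (m l : ℕ) (θ : Set (Cyl m l)) (J : Set (Hw (m + l))) : Prop :=
  J ⊆ RwTheta m l θ ∧ J ≠ RwTheta m l θ ∧
    ∀ β ∈ J, ∀ α ∈ RwTheta m l θ, trile m l θ α β → α ∈ J


/-! ### Real roots as differences of partial counts -/

/-- A function of `n` whose consecutive values differ by a simple root: up to a vector independent
of `n`, the coefficient vector of `∑_{0 < k ≤ n} α_k` (indices mod `κ`), extended to all integers
`n`. Only differences `cnt κ j - cnt κ i` matter. -/
def cnt (κ : ℕ) (n : ℤ) : ZMod κ → ℚ := fun r => (((n - (r.val : ℤ)) / (κ : ℤ) : ℤ) : ℚ)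

/-- For `i < j`, the element `∑_{i < k ≤ j} α_k`; antisymmetric in `i` and `j`. -/
def rt (κ : ℕ) (i j : ℤ) : Hw κ := (cnt κ j - cnt κ i, 0)

lemma cnt_add_one (κ : ℕ) [NeZero κ] (n : ℤ) :
    cnt κ (n + 1) = cnt κ n + Pi.single ((n + 1 : ℤ) : ZMod κ) 1 := by
  have hκ : (0 : ℤ) < κ := by have := NeZero.pos κ; exact_mod_cast this
  funext r
  have hr : ((r.val : ℤ) : ZMod κ) = r := by simp
  have key : ((n + 1 : ℤ) : ZMod κ) = r ↔ (κ : ℤ) ∣ n + 1 - r.val := by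
    rw [← ZMod.intCast_eq_intCast_iff_dvd_sub, hr, eq_comm]
  simp only [cnt, Pi.add_apply, Pi.single_apply, eq_comm (a := r), key]
  set v : ℤ := (r.val : ℤ)
  have e0 := Int.emod_add_mul_ediv (n - v) κ
  have e1 := Int.emod_add_mul_ediv (n + 1 - v) κ
  have a0 := Int.emod_nonneg (n - v) hκ.ne'
  have a1 := Int.emod_nonneg (n + 1 - v) hκ.ne'
  have b0 := Int.emod_lt_of_pos (n - v) hκ
  have b1 := Int.emod_lt_of_pos (n + 1 - v) hκ
  simp only [Int.dvd_iff_emod_eq_zero]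
  set x := (n - v) / κ
  set y := (n + 1 - v) / κ
  split_ifs with h
  · have : y = x + 1 := by
      have h1 : (κ : ℤ) * (y - x) = (n - v) % κ + 1 := by linarith
      have h2 : 0 < y - x := by by_contra hh; nlinarith
      have h3 : y - x < 2 := by by_contra hh; nlinarith
      omega
    rw [this]; push_cast; ring
  · have : y = x := by
      have h1 : (κ : ℤ) * (y - x) = (n - v) % κ + 1 - (n + 1 - v) % κ := by linarith
      have h0 : 0 < (n + 1 - v) % κ := by omega
      have h2 : -1 < y - x := by by_contra hh; nlinarith
      have h3 : y - x < 1 := by by_contra hh; nlinarith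
      omega
    rw [this]; ring

lemma cnt_add_mul (κ : ℕ) [NeZero κ] (n t : ℤ) (r : ZMod κ) :
    cnt κ (n + t * κ) r = cnt κ n r + t := by
  have hκ : (κ : ℤ) ≠ 0 := by have := NeZero.ne κ; exact_mod_cast this
  simp only [cnt]
  rw [show n + t * κ - (r.val : ℤ) = (n - r.val) + t * κ by ring, Int.add_mul_ediv_right _ _ hκ]
  push_cast; ring

lemma cnt_mono (κ : ℕ) [NeZero κ] {i j : ℤ} (h : i ≤ j) (r : ZMod κ) : cnt κ i r ≤ cnt κ j r := by
  have hκ : (0 : ℤ) < κ := by have := NeZero.pos κ; exact_mod_cast this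
  simp only [cnt]
  exact_mod_cast Int.ediv_le_ediv hκ (by omega)

lemma eq_of_step {M : Type*} (f : ℤ → M) (h : ∀ n, f (n + 1) = f n) (i j : ℤ) : f i = f j := by
  have h0 : ∀ n, f n = f 0 := fun n => by
    induction n using Int.induction_on with
    | zero => rfl
    | succ k ih => rw [h, ih]
    | pred k ih => rw [← ih, ← h (-(k : ℤ) - 1)]; congr 1; ring
  rw [h0 i, h0 j]

/-- The discrete derivative of the coefficients of `rt κ i j` detects `i` and `j` mod `κ`. -/
lemma rt_deriv (κ : ℕ) [NeZero κ] (i j : ℤ) (r : ZMod κ) :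
    (rt κ i j).1 r - (rt κ i j).1 (r + 1) =
      (if (j : ZMod κ) = r then 1 else 0) - (if (i : ZMod κ) = r then 1 else 0) := by
  have h := eq_of_step
    (fun n : ℤ => cnt κ n r - cnt κ n (r + 1) - (if (n : ZMod κ) = r then (1 : ℚ) else 0))
    (fun n => by
      simp only [cnt_add_one, Pi.add_apply, Pi.single_apply]
      push_cast
      simp only [add_left_inj, eq_comm (a := r)]
      ring) i j
  simp only [rt, Pi.sub_apply] at h ⊢
  linarith

lemma rt_add_one (κ : ℕ) [NeZero κ] (n : ℤ) : rt κ n (n + 1) = alphaR κ ((n + 1 : ℤ) : ZMod κ) := by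
  simp [rt, alphaR, cnt_add_one]

lemma rt_trans (κ : ℕ) (i j k : ℤ) : rt κ i j + rt κ j k = rt κ i k := by
  simp [rt]

lemma sum_alphaR_Ioc (κ : ℕ) [NeZero κ] (i j : ℤ) (h : i ≤ j) :
    ∑ k ∈ Finset.Ioc i j, alphaR κ (k : ZMod κ) = rt κ i j := by
  induction j, h using Int.leInduction with
  | base => simp [rt, Prod.ext_iff]
  | succ j hj ih =>
    rw [← rt_trans κ i j (j + 1), ← ih, rt_add_one,
      ← Finset.insert_Ioc_right_eq_Ioc_add_one hj, Finset.sum_insert (by simp), add_comm]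

lemma pairSimple_rt (κ : ℕ) [NeZero κ] (i j : ℤ) (r : ZMod κ) :
    pairSimple κ (rt κ i j) r =
      ((if (j : ZMod κ) = r then 1 else 0) - (if (i : ZMod κ) = r then 1 else 0)) -
      ((if (j : ZMod κ) = r - 1 then 1 else 0) - (if (i : ZMod κ) = r - 1 then 1 else 0)) := by
  rw [← rt_deriv, ← rt_deriv, pairSimple, finsum_eq_sum_of_fintype]
  have e1 : ∀ k : ZMod κ, (r - k = 1) ↔ (r - 1 = k) := fun k =>
    ⟨fun h => by rw [← h]; ring, fun h => by rw [← h]; ring⟩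
  have e2 : ∀ k : ZMod κ, (r - k = -1) ↔ (r + 1 = k) := fun k =>
    ⟨fun h => by linear_combination h, fun h => by linear_combination h⟩
  simp only [cartan, mul_add, Finset.sum_add_distrib, e1, e2, mul_ite, mul_zero,
    Finset.sum_ite_eq, Finset.mem_univ, if_true, sub_add_cancel]
  simp only [rt, zero_mul, ite_self]
  ring

/-- The action of the simple reflection `s_r` on the indices of the roots `rt κ i j`:
it swaps `n` and `n + 1` whenever `n + 1 ≡ r`. -/
def sw (κ : ℕ) (r : ZMod κ) (n : ℤ) : ℤ :=
  if (n : ZMod κ) = r then n - 1 else if (n : ZMod κ) = r - 1 then n + 1 else n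

lemma cnt_sw (κ : ℕ) (hκ : 2 ≤ κ) (r : ZMod κ) (n : ℤ) :
    cnt κ (sw κ r n) = cnt κ n + ((if (n : ZMod κ) = r - 1 then (1 : ℚ) else 0) -
      (if (n : ZMod κ) = r then 1 else 0)) • Pi.single r (1 : ℚ) := by
  have : NeZero κ := ⟨by omega⟩
  have : Fact (1 < κ) := ⟨by omega⟩
  unfold sw
  by_cases h1 : (n : ZMod κ) = r
  · have h2 : r ≠ r - 1 := fun h => one_ne_zero (sub_eq_self.mp h.symm)
    have h := cnt_add_one κ (n - 1)
    rw [sub_add_cancel, h1] at h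
    simp [h1, h, h2]
  · by_cases h2 : (n : ZMod κ) = r - 1
    · have h := cnt_add_one κ n
      push_cast at h
      rw [h2, sub_add_cancel] at h
      simp [h2, h]
    · simp [h1, h2]

lemma sFun_rt (κ : ℕ) (hκ : 2 ≤ κ) (r : ZMod κ) (i j : ℤ) :
    sFun κ r (rt κ i j) = rt κ (sw κ r i) (sw κ r j) := by
  have : NeZero κ := ⟨by omega⟩
  rw [sFun, pairSimple_rt]
  simp only [rt, cnt_sw κ hκ, alphaR]
  ext
  · simp only [Prod.fst_sub, Prod.smul_fst, Pi.sub_apply, Pi.add_apply, Pi.smul_apply, smul_eq_mul]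
    ring
  · simp

lemma sw_cast (κ : ℕ) (r : ZMod κ) (n : ℤ) :
    ((sw κ r n : ℤ) : ZMod κ) = Equiv.swap r (r - 1) (n : ZMod κ) := by
  unfold sw
  rw [Equiv.swap_apply_def]
  split_ifs with h1 h2
  · push_cast; rw [h1]
  · push_cast; rw [h2]; ring
  · rfl

lemma sw_cast_ne (κ : ℕ) (r : ZMod κ) {i j : ℤ} (h : (i : ZMod κ) ≠ j) :
    ((sw κ r i : ℤ) : ZMod κ) ≠ (sw κ r j : ℤ) := by
  rw [sw_cast, sw_cast]
  exact fun e => h (Equiv.injective _ e)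

lemma exists_rt_of_mem_Rset (κ : ℕ) (hκ : 2 ≤ κ) (β : Hw κ) (h : β ∈ Rset κ) :
    ∃ i j : ℤ, (i : ZMod κ) ≠ j ∧ β = rt κ i j := by
  have : NeZero κ := ⟨by omega⟩
  have : Fact (1 < κ) := ⟨by omega⟩
  obtain ⟨L, c, rfl⟩ := h
  induction L with
  | nil =>
    refine ⟨(c.val : ℤ) - 1, (c.val : ℤ) - 1 + 1, ?_, ?_⟩
    · push_cast; simp
    · rw [rt_add_one]; simp [wordProd]
  | cons r L ih =>
    obtain ⟨i, j, hij, e⟩ := ih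
    refine ⟨sw κ r i, sw κ r j, sw_cast_ne κ r hij, ?_⟩
    rw [← sFun_rt κ hκ, ← e]
    simp [wordProd]

lemma sFun_mem_Rset (κ : ℕ) (r : ZMod κ) {β : Hw κ} (h : β ∈ Rset κ) : sFun κ r β ∈ Rset κ := by
  obtain ⟨L, c, rfl⟩ := h
  exact ⟨r :: L, c, by simp [wordProd]⟩

/-- `rt κ i j` is a real root when `i < j` and `i ≢ j`: reflecting in `α_j` shortens the
interval `(i, j]`, until a simple root is left. -/
lemma rt_mem_Rset (κ : ℕ) (hκ : 2 ≤ κ) (d : ℕ) : ∀ i j : ℤ, (j - i).toNat = d → i < j →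
    (i : ZMod κ) ≠ j → rt κ i j ∈ Rset κ := by
  have : NeZero κ := ⟨by omega⟩
  have : Fact (1 < κ) := ⟨by omega⟩
  induction d using Nat.strong_induction_on with
  | _ d ih =>
  intro i j hd hij hne
  have hj : sw κ (j : ZMod κ) (j - 1) = j := by simp [sw]
  by_cases h1 : j = i + 1
  · subst h1
    rw [rt_add_one]
    exact ⟨[], _, rfl⟩
  by_cases h2 : (i : ZMod κ) = j - 1
  · have h3 : i + 2 < j := by
      by_contra hlt
      have hj2 : j = i + 2 := by omega
      subst hj2
      push_cast at h2
      have : (1 : ZMod κ) = 0 := by linear_combination -h2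
      exact one_ne_zero this
    have hi : sw κ (j : ZMod κ) (i + 1) = i := by simp [sw, h2]
    have := sFun_mem_Rset κ (j : ZMod κ) (ih _ (by omega) (i + 1) (j - 1) rfl (by omega)
      (by push_cast; rw [h2, sub_add_cancel]
          exact fun h => one_ne_zero (sub_eq_self.mp h.symm)))
    rwa [sFun_rt κ hκ, hi, hj] at this
  · have hi : sw κ (j : ZMod κ) i = i := by simp [sw, h2, hne]
    have := sFun_mem_Rset κ (j : ZMod κ) (ih _ (by omega) i (j - 1) rfl (by omega)
      (by push_cast; exact h2))
    rwa [sFun_rt κ hκ, hi, hj] at this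

lemma rt_mem_QPos (κ : ℕ) [NeZero κ] {i j : ℤ} (h : i < j) : rt κ i j ∈ QPos κ := by
  refine ⟨rfl, fun r => ?_⟩
  have hm := cnt_mono κ h.le r
  simp only [cnt, Int.cast_le] at hm
  refine ⟨(((j - (r.val : ℤ)) / (κ : ℤ)) - ((i - (r.val : ℤ)) / (κ : ℤ))).toNat, ?_⟩
  simp only [rt, cnt, Pi.sub_apply]
  rw [← Int.cast_natCast (R := ℚ), Int.toNat_of_nonneg (by omega)]
  push_cast; rfl

lemma lt_of_rt_mem_QPos (κ : ℕ) [NeZero κ] {i j : ℤ} (hne : i ≠ j) (h : rt κ i j ∈ QPos κ) :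
    i < j := by
  by_contra hlt
  obtain ⟨n, hn⟩ := h.2 (i : ZMod κ)
  have h1 := cnt_add_one κ (i - 1)
  rw [sub_add_cancel] at h1
  have h2 := cnt_mono κ (show j ≤ i - 1 by omega) (i : ZMod κ)
  have h3 : (0 : ℚ) ≤ n := Nat.cast_nonneg n
  simp only [rt, Pi.sub_apply, h1, Pi.add_apply, Pi.single_eq_same] at hn
  linarith

lemma mem_Rpos_iff (κ : ℕ) (hκ : 2 ≤ κ) (β : Hw κ) :
    β ∈ Rpos κ ↔ ∃ i j : ℤ, i < j ∧ (i : ZMod κ) ≠ j ∧ β = rt κ i j := by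
  have : NeZero κ := ⟨by omega⟩
  constructor
  · rintro ⟨hR, hQ⟩
    obtain ⟨i, j, hij, rfl⟩ := exists_rt_of_mem_Rset κ hκ β hR
    exact ⟨i, j, lt_of_rt_mem_QPos κ (fun e => hij (by rw [e])) hQ, hij, rfl⟩
  · rintro ⟨i, j, hlt, hij, rfl⟩
    exact ⟨rt_mem_Rset κ hκ _ i j rfl hlt hij, rt_mem_QPos κ hlt⟩

/-- A root `rt κ i j` determines `(i, j)` up to simultaneous translation by multiples of `κ`. -/
lemma rt_inj (κ : ℕ) [NeZero κ] {i j i' j' : ℤ} (hij : (i : ZMod κ) ≠ j)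
    (h : rt κ i j = rt κ i' j') : ∃ t : ℤ, i' = i + t * κ ∧ j' = j + t * κ := by
  have hd : ∀ r : ZMod κ, _ := fun r => (rt_deriv κ i j r).symm.trans
    ((by rw [h] : (rt κ i j).1 r - (rt κ i j).1 (r + 1) = _).trans (rt_deriv κ i' j' r))
  have hj : (j : ZMod κ) = j' := by
    have := hd j
    by_contra hne
    rw [if_pos rfl, if_neg hij, if_neg (Ne.symm hne)] at this
    split_ifs at this <;> norm_num at this
  have hi : (i : ZMod κ) = i' := by
    have := hd i
    by_contra hne
    rw [if_pos rfl, if_neg hij.symm, if_neg (Ne.symm hne)] at this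
    split_ifs at this <;> norm_num at this
  rw [ZMod.intCast_eq_intCast_iff_dvd_sub] at hi hj
  obtain ⟨s, hs⟩ := hi
  obtain ⟨t, ht⟩ := hj
  obtain rfl : i' = i + s * κ := by linarith
  obtain rfl : j' = j + t * κ := by linarith
  have h0 := congrFun (congrArg Prod.fst h) 0
  simp only [rt, Pi.sub_apply, cnt_add_mul] at h0
  have : (s : ℚ) = t := by linarith
  have : s = t := by exact_mod_cast this
  exact ⟨s, rfl, by rw [this]⟩

/-! ### The boundary profile of a cylindric diagram -/

lemma exists_pr (m l : ℕ) (x : Cyl m l) : ∃ a b : ℤ, pr m l (a, b) = x := by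
  obtain ⟨⟨a, b⟩, h⟩ := QuotientAddGroup.mk'_surjective _ x
  exact ⟨a, b, h⟩

lemma pr_eq_iff (m l : ℕ) (a b a' b' : ℤ) :
    pr m l (a, b) = pr m l (a', b') ↔ ∃ t : ℤ, a' = a + t * m ∧ b' = b - t * l := by
  rw [pr, QuotientAddGroup.mk'_apply, QuotientAddGroup.mk'_apply, QuotientAddGroup.eq,
    AddSubgroup.mem_zmultiples_iff]
  refine exists_congr fun t => ?_
  simp only [om, Prod.ext_iff, Prod.smul_fst, Prod.smul_snd, Prod.fst_add, Prod.snd_add,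
    Prod.fst_neg, Prod.snd_neg, smul_eq_mul]
  constructor
  · rintro ⟨h1, h2⟩; constructor <;> linarith
  · rintro ⟨h1, h2⟩; constructor <;> linarith

lemma cle_pr_iff (m l : ℕ) (a b a' b' : ℤ) :
    cle m l (pr m l (a, b)) (pr m l (a', b')) ↔ ∃ t : ℤ, a' + t * m ≤ a ∧ b' - t * l ≤ b := by
  constructor
  · rintro ⟨⟨p, q⟩, ⟨p', q'⟩, h1, h2, h3, h4⟩
    obtain ⟨s, rfl, rfl⟩ := (pr_eq_iff m l _ _ _ _).1 h1
    obtain ⟨t, rfl, rfl⟩ := (pr_eq_iff m l _ _ _ _).1 h2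
    simp only at h3 h4
    exact ⟨s - t, by linarith, by linarith⟩
  · rintro ⟨t, h1, h2⟩
    exact ⟨(a, b), (a' + t * m, b' - t * l), rfl, ((pr_eq_iff m l _ _ _ _).2 ⟨t, rfl, rfl⟩).symm,
      h1, h2⟩

lemma con_pr (m l : ℕ) (a b : ℤ) : con m l (pr m l (a, b)) = ((b - a : ℤ) : ZMod (m + l)) := rfl

/-- `A c` is the largest `a` such that the cell `(a, a + c)` of content `c` projects into `θ`. -/
structure IsProfile (m l : ℕ) (θ : Set (Cyl m l)) (A : ℤ → ℤ) : Prop where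
  mem : ∀ a b, pr m l (a, b) ∈ θ ↔ a ≤ A (b - a)
  succ_le : ∀ c, A (c + 1) ≤ A c
  le_succ : ∀ c, A c - 1 ≤ A (c + 1)
  period : ∀ c t : ℤ, A (c + t * ((m + l : ℕ) : ℤ)) = A c - t * m

lemma exists_profile (m l : ℕ) (θ : Set (Cyl m l)) (hθ : IsCylindric m l θ) :
    ∃ A, IsProfile m l θ A := by
  obtain ⟨⟨x0, hx0⟩, huniv, hup⟩ := hθ
  obtain ⟨x1, hx1⟩ := (Set.ne_univ_iff_exists_notMem θ).1 huniv
  obtain ⟨a0, b0, rfl⟩ := exists_pr m l x0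
  obtain ⟨a1, b1, rfl⟩ := exists_pr m l x1
  have hup' : ∀ a b a' b' : ℤ, pr m l (a, b) ∈ θ → a' ≤ a → b' ≤ b → pr m l (a', b') ∈ θ :=
    fun a b a' b' h h1 h2 => hup _ h _ ((cle_pr_iff m l _ _ _ _).2 ⟨0, by simpa, by simpa⟩)
  have hex : ∀ c : ℤ, ∃ A : ℤ, ∀ a : ℤ, pr m l (a, a + c) ∈ θ ↔ a ≤ A := fun c => by
    obtain ⟨A, hA1, hA2⟩ := Int.exists_greatest_of_bdd (P := fun a => pr m l (a, a + c) ∈ θ)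
      ⟨max a1 (b1 - c), fun z hz => by
        by_contra hlt
        exact hx1 (hup' _ _ _ _ hz (by omega) (by omega))⟩
      ⟨min a0 (b0 - c), hup' _ _ _ _ hx0 (by omega) (by omega)⟩
    exact ⟨A, fun a => ⟨hA2 a, fun h => hup' _ _ _ _ hA1 h (by omega)⟩⟩
  choose A hA using hex
  have hmem : ∀ a b, pr m l (a, b) ∈ θ ↔ a ≤ A (b - a) := fun a b => by
    rw [← hA, add_sub_cancel]
  refine ⟨A, hmem, fun c => ?_, fun c => ?_, fun c t => ?_⟩
  · rw [← hA]
    exact hup' _ _ _ _ ((hA (c + 1) (A (c + 1))).2 le_rfl) le_rfl (by omega)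
  · rw [← hA]
    exact hup' _ _ _ _ ((hA c (A c)).2 le_rfl) (by omega) (by omega)
  · have key : ∀ a, a ≤ A (c + t * ((m + l : ℕ) : ℤ)) ↔ a ≤ A c - t * m := fun a => by
      rw [le_sub_iff_add_le, ← hA, ← hA, (pr_eq_iff m l a _ (a + t * m) (a + t * m + c)).2
        ⟨t, rfl, by push_cast; ring⟩]
    exact le_antisymm ((key _).1 le_rfl) ((key _).2 le_rfl)

namespace IsProfile

variable {m l : ℕ} {θ : Set (Cyl m l)} {A : ℤ → ℤ}

lemma anti (h : IsProfile m l θ A) : Antitone A := antitone_int_of_succ_le h.succ_le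

lemma mono (h : IsProfile m l θ A) : Monotone (fun c => A c + c) :=
  monotone_int_of_le_succ fun c => by have := h.le_succ c; omega

/-- Row `a` of `θ` ends at the cell of some content `p`, where the profile drops. -/
lemma exists_row (h : IsProfile m l θ A) (hm : 1 ≤ m) (a : ℤ) :
    ∃ p, A p = a ∧ A (p + 1) = a - 1 := by
  have hm' : (1 : ℤ) ≤ m := by exact_mod_cast hm
  obtain ⟨p, hp1, hp2⟩ := Int.exists_greatest_of_bdd (P := fun q => a ≤ A q)
    ⟨(|A 0 - a| + 1) * ((m + l : ℕ) : ℤ), fun z hz => by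
      by_contra hlt
      have h1 := h.anti (not_le.1 hlt).le
      have h2 := h.period 0 (|A 0 - a| + 1)
      rw [zero_add] at h2
      have h3 := le_abs_self (A 0 - a)
      nlinarith [abs_nonneg (A 0 - a)]⟩
    ⟨0 + (-|A 0 - a|) * ((m + l : ℕ) : ℤ), by
      rw [h.period]
      have h3 := neg_abs_le (A 0 - a)
      nlinarith [abs_nonneg (A 0 - a)]⟩
  have h1 := h.le_succ p
  have h2 : ¬ a ≤ A (p + 1) := fun hh => by have := hp2 _ hh; omega
  exact ⟨p, by omega, by omega⟩

/-- Column `b` of `θ` ends at the cell of some content `q`, just after a flat step of the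
profile. -/
lemma exists_col (h : IsProfile m l θ A) (hl : 1 ≤ l) (b : ℤ) :
    ∃ q, A q + q = b ∧ A (q - 1) = A q := by
  have hl' : (1 : ℤ) ≤ l := by exact_mod_cast hl
  obtain ⟨q, hq1, hq2⟩ := Int.exists_least_of_bdd (P := fun q => b ≤ A q + q)
    ⟨0 + (-(|A 0 - b| + 1)) * ((m + l : ℕ) : ℤ), fun z hz => by
      by_contra hlt
      have h1 := h.mono (not_le.1 hlt).le
      simp only [h.period] at h1
      push_cast at h1
      have h3 := le_abs_self (A 0 - b)
      nlinarith [abs_nonneg (A 0 - b)]⟩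
    ⟨0 + |A 0 - b| * ((m + l : ℕ) : ℤ), by
      rw [h.period]
      push_cast
      have h3 := neg_abs_le (A 0 - b)
      nlinarith [abs_nonneg (A 0 - b)]⟩
  have h1 := h.succ_le (q - 1)
  have h2 : ¬ b ≤ A (q - 1) + (q - 1) := fun hh => by have := hq2 _ hh; omega
  rw [sub_add_cancel] at h1
  have h4 := h.le_succ (q - 1)
  rw [sub_add_cancel] at h4
  exact ⟨q, by omega, by omega⟩

/-! ### Hooks -/

lemma arm_sum (h : IsProfile m l θ A) (hm : 1 ≤ m) {a b p : ℤ} (hp : A p = a)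
    (hp' : A (p + 1) = a - 1) (hc : b - a ≤ p) :
    ∑ᶠ y ∈ armSet m l θ (pr m l (a, b)), alC m l y = rt (m + l) (b - a) p := by
  have : NeZero (m + l) := ⟨by omega⟩
  have hset : armSet m l θ (pr m l (a, b)) =
      (fun k : ℤ => pr m l (a, a + k)) '' (Finset.Ioc (b - a) p : Finset ℤ) := by
    ext y
    simp only [armSet, Set.mem_ofPred_eq, Set.mem_image, Finset.coe_Ioc, Set.mem_Ioc, ← map_add,
      Prod.mk_add_mk, add_zero]
    constructor
    · rintro ⟨hy, k, hk, rfl⟩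
      rw [h.mem] at hy
      refine ⟨b + k - a, ⟨by omega, ?_⟩, by congr 2; ring⟩
      by_contra hlt
      have := h.anti (show p + 1 ≤ b + k - a by omega)
      omega
    · rintro ⟨k, ⟨hk1, hk2⟩, rfl⟩
      refine ⟨?_, (a + k - b).toNat, by omega, ?_⟩
      · rw [h.mem, add_sub_cancel_left]
        have := h.anti hk2
        omega
      · rw [Int.toNat_of_nonneg (by omega)]; congr 2; ring
  have hinj : Set.InjOn (fun k : ℤ => pr m l (a, a + k)) (Finset.Ioc (b - a) p : Finset ℤ) := by
    intro k _ k' _ e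
    obtain ⟨t, h1, h2⟩ := (pr_eq_iff m l _ _ _ _).1 e
    -- equal first coordinates force the translation by `ω` to be trivial
    have ht : t * (m : ℤ) = 0 := by linarith
    rcases mul_eq_zero.1 ht with rfl | h0
    · linarith
    · omega
  rw [hset, finsum_mem_image hinj, finsum_mem_coe_finset, ← sum_alphaR_Ioc _ _ _ hc]
  refine Finset.sum_congr rfl fun k _ => ?_
  rw [alC, con_pr, add_sub_cancel_left]

lemma leg_sum (h : IsProfile m l θ A) (hl : 1 ≤ l) {a b q : ℤ} (hq : A q + q = b)
    (hq' : A (q - 1) = A q) (hc : q ≤ b - a) :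
    ∑ᶠ y ∈ legSet m l θ (pr m l (a, b)), alC m l y = rt (m + l) (q - 1) (b - a - 1) := by
  have : NeZero (m + l) := ⟨by omega⟩
  have hset : legSet m l θ (pr m l (a, b)) =
      (fun k : ℤ => pr m l (b - k, b)) '' (Finset.Ioc (q - 1) (b - a - 1) : Finset ℤ) := by
    ext y
    simp only [legSet, Set.mem_ofPred_eq, Set.mem_image, Finset.coe_Ioc, Set.mem_Ioc, ← map_add,
      Prod.mk_add_mk, add_zero]
    constructor
    · rintro ⟨hy, k, hk, rfl⟩
      rw [h.mem] at hy
      refine ⟨b - (a + k), ⟨?_, by omega⟩, by congr 2; ring⟩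
      by_contra hlt
      have := h.mono (show b - (a + k) ≤ q - 1 by omega)
      simp only at this
      omega
    · rintro ⟨k, ⟨hk1, hk2⟩, rfl⟩
      refine ⟨?_, (b - k - a).toNat, by omega, ?_⟩
      · rw [h.mem, sub_sub_cancel]
        have := h.mono (show q ≤ k by omega)
        simp only at this
        omega
      · rw [Int.toNat_of_nonneg (by omega)]; congr 2; ring
  have hinj : Set.InjOn (fun k : ℤ => pr m l (b - k, b))
      (Finset.Ioc (q - 1) (b - a - 1) : Finset ℤ) := by
    intro k _ k' _ e
    obtain ⟨t, h1, h2⟩ := (pr_eq_iff m l _ _ _ _).1 e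
    have ht : t * (l : ℤ) = 0 := by linarith
    rcases mul_eq_zero.1 ht with rfl | h0
    · linarith
    · omega
  rw [hset, finsum_mem_image hinj, finsum_mem_coe_finset,
    ← sum_alphaR_Ioc _ _ _ (by omega : q - 1 ≤ b - a - 1)]
  refine Finset.sum_congr rfl fun k _ => ?_
  rw [alC, con_pr, sub_sub_cancel]

/-- The hook at `(a, b)` runs through the contents from the end `q` of its column to the end `p`
of its row. -/
lemma hk_eq (h : IsProfile m l θ A) (hm : 1 ≤ m) (hl : 1 ≤ l) {a b p q : ℤ}
    (hp : A p = a) (hp' : A (p + 1) = a - 1) (hq : A q + q = b) (hq' : A (q - 1) = A q)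
    (hx : pr m l (a, b) ∈ θ) :
    q ≤ p ∧ hk m l θ (pr m l (a, b)) = rt (m + l) (q - 1) p := by
  have : NeZero (m + l) := ⟨by omega⟩
  rw [h.mem] at hx
  have h1 : b - a ≤ p := by
    by_contra hlt
    have := h.anti (show p + 1 ≤ b - a by omega)
    omega
  have h2 : q ≤ b - a := by
    by_contra hlt
    have := h.mono (show b - a ≤ q - 1 by omega)
    simp only at this
    omega
  refine ⟨h2.trans h1, ?_⟩
  have h3 := rt_add_one (m + l) (b - a - 1)
  rw [sub_add_cancel] at h3
  rw [hk, h.arm_sum hm hp hp' h1, h.leg_sum hl hq hq' h2, alC, con_pr, ← h3, rt_trans,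
    add_comm (rt _ _ _), rt_trans]

/-! ### The weight `P_θ` -/

lemma isBottomCell_iff (h : IsProfile m l θ A) (hm : 1 ≤ m) (hl : 1 ≤ l) (c : ℤ) (x : Cyl m l) :
    IsBottomCell m l θ (c : ZMod (m + l)) x ↔ x = pr m l (A c, A c + c) := by
  -- a cell whose content is `c` mod `κ` has a lift of content exactly `c`
  have lift : ∀ y : Cyl m l, con m l y = (c : ZMod (m + l)) → ∃ a, y = pr m l (a, a + c) := by
    intro y hy
    obtain ⟨a, b, rfl⟩ := exists_pr m l y
    rw [con_pr, ZMod.intCast_eq_intCast_iff_dvd_sub] at hy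
    obtain ⟨t, ht⟩ := hy
    refine ⟨a - t * m, (pr_eq_iff m l _ _ _ _).2 ⟨-t, by ring, ?_⟩⟩
    push_cast at ht
    linarith
  have hin : ∀ a, pr m l (a, a + c) ∈ θ ↔ a ≤ A c := fun a => by
    rw [h.mem, add_sub_cancel_left]
  constructor
  · rintro ⟨hx, hcon, hmin⟩
    obtain ⟨a, rfl⟩ := lift x hcon
    rw [hin] at hx
    obtain ⟨t, h1, h2⟩ := (cle_pr_iff m l _ _ _ _).1
      (hmin (pr m l (A c, A c + c)) ((hin _).2 le_rfl) (by rw [con_pr, add_sub_cancel_left]))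
    have hl' : (1 : ℤ) ≤ l := by exact_mod_cast hl
    have hm' : (1 : ℤ) ≤ m := by exact_mod_cast hm
    have ht1 : t ≤ 0 := by by_contra hh; nlinarith
    have ht2 : 0 ≤ t := by by_contra hh; nlinarith
    obtain rfl : t = 0 := le_antisymm ht1 ht2
    obtain rfl : a = A c := by linarith
    rfl
  · rintro rfl
    refine ⟨(hin _).2 le_rfl, by rw [con_pr, add_sub_cancel_left], fun y hy hcy => ?_⟩
    obtain ⟨a, rfl⟩ := lift y hcy
    rw [hin] at hy
    exact (cle_pr_iff m l _ _ _ _).2 ⟨0, by linarith, by linarith⟩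

lemma mem_btm_iff (h : IsProfile m l θ A) (hm : 1 ≤ m) (hl : 1 ≤ l) (x : Cyl m l) :
    x ∈ btm m l θ ↔ ∃ c : ℤ, x = pr m l (A c, A c + c) := by
  constructor
  · rintro ⟨i, hi⟩
    obtain ⟨c, rfl⟩ := ZMod.intCast_surjective i
    exact ⟨c, (h.isBottomCell_iff hm hl c x).1 hi⟩
  · rintro ⟨c, hc⟩
    exact ⟨c, (h.isBottomCell_iff hm hl c x).2 hc⟩

/-- Comparison of bottom cells, with the lift of the second one chosen on the boundary. -/
lemma cle_btm_iff (h : IsProfile m l θ A) (c d : ℤ) :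
    cle m l (pr m l (A c, A c + c)) (pr m l (A d, A d + d)) ↔
      ∃ t : ℤ, A (d + t * ((m + l : ℕ) : ℤ)) ≤ A c ∧
        A (d + t * ((m + l : ℕ) : ℤ)) + (d + t * ((m + l : ℕ) : ℤ)) ≤ A c + c := by
  rw [cle_pr_iff]
  constructor
  · rintro ⟨t, h1, h2⟩
    refine ⟨-t, ?_⟩
    rw [h.period]
    push_cast
    constructor <;> linarith
  · rintro ⟨t, h1, h2⟩
    rw [h.period] at h1 h2
    push_cast at h2
    exact ⟨-t, by linarith, by linarith⟩

lemma pr_btm_period (h : IsProfile m l θ A) (d t : ℤ) :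
    pr m l (A (d + t * ((m + l : ℕ) : ℤ)), A (d + t * ((m + l : ℕ) : ℤ)) +
      (d + t * ((m + l : ℕ) : ℤ))) = pr m l (A d, A d + d) := by
  refine (pr_eq_iff m l _ _ _ _).2 ⟨t, ?_, ?_⟩ <;> rw [h.period] <;> push_cast <;> ring

lemma pr_btm_ne (hm : 1 ≤ m) (hl : 1 ≤ l) (A : ℤ → ℤ) (c : ℤ) :
    pr m l (A (c + 1), A (c + 1) + (c + 1)) ≠ pr m l (A c, A c + c) := by
  have : Fact (1 < m + l) := ⟨by omega⟩
  intro e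
  have e2 := congrArg (con m l) e
  simp only [con_pr, add_sub_cancel_left] at e2
  push_cast at e2
  simp at e2

lemma mem_btmMax_iff (h : IsProfile m l θ A) (hm : 1 ≤ m) (hl : 1 ≤ l) (c : ℤ) :
    pr m l (A c, A c + c) ∈ btmMax m l θ ↔ A (c + 1) = A c ∧ A (c - 1) = A c + 1 := by
  have hc1 := h.succ_le c
  have hc2 := h.le_succ c
  have hd1 := h.succ_le (c - 1)
  have hd2 := h.le_succ (c - 1)
  rw [sub_add_cancel] at hd1 hd2
  constructor
  · rintro ⟨-, hmax⟩
    constructor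
    · by_contra hne
      refine pr_btm_ne hm hl A c (hmax _ ((h.mem_btm_iff hm hl _).2 ⟨c + 1, rfl⟩) ?_)
      exact (cle_pr_iff m l _ _ _ _).2 ⟨0, by omega, by omega⟩
    · by_contra hne
      have := hmax _ ((h.mem_btm_iff hm hl _).2 ⟨c - 1, rfl⟩)
        ((cle_pr_iff m l _ _ _ _).2 ⟨0, by omega, by omega⟩)
      have h2 := pr_btm_ne hm hl A (c - 1)
      rw [sub_add_cancel] at h2
      exact h2 this.symm
  · rintro ⟨h1, h2⟩
    refine ⟨(h.mem_btm_iff hm hl _).2 ⟨c, rfl⟩, fun y hy hle => ?_⟩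
    obtain ⟨d, rfl⟩ := (h.mem_btm_iff hm hl _).1 hy
    obtain ⟨t, h3, h4⟩ := (h.cle_btm_iff c d).1 hle
    rw [← h.pr_btm_period d t]
    generalize d + t * ((m + l : ℕ) : ℤ) = e at *
    obtain rfl : e = c := by
      rcases lt_trichotomy e c with hlt | heq | hlt
      · have := h.anti (show e ≤ c - 1 by omega)
        omega
      · exact heq
      · have := h.mono (show c + 1 ≤ e by omega)
        simp only at this
        omega
    rfl

lemma mem_btmMin_iff (h : IsProfile m l θ A) (hm : 1 ≤ m) (hl : 1 ≤ l) (c : ℤ) :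
    pr m l (A c, A c + c) ∈ btmMin m l θ ↔ A (c + 1) = A c - 1 ∧ A (c - 1) = A c := by
  have hc1 := h.succ_le c
  have hc2 := h.le_succ c
  have hd1 := h.succ_le (c - 1)
  have hd2 := h.le_succ (c - 1)
  rw [sub_add_cancel] at hd1 hd2
  constructor
  · rintro ⟨-, hmin⟩
    constructor
    · by_contra hne
      refine pr_btm_ne hm hl A c (hmin _ ((h.mem_btm_iff hm hl _).2 ⟨c + 1, rfl⟩) ?_)
      exact (cle_pr_iff m l _ _ _ _).2 ⟨0, by omega, by omega⟩
    · by_contra hne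
      have := hmin _ ((h.mem_btm_iff hm hl _).2 ⟨c - 1, rfl⟩)
        ((cle_pr_iff m l _ _ _ _).2 ⟨0, by omega, by omega⟩)
      have h2 := pr_btm_ne hm hl A (c - 1)
      rw [sub_add_cancel] at h2
      exact h2 this.symm
  · rintro ⟨h1, h2⟩
    refine ⟨(h.mem_btm_iff hm hl _).2 ⟨c, rfl⟩, fun y hy hle => ?_⟩
    obtain ⟨d, rfl⟩ := (h.mem_btm_iff hm hl _).1 hy
    obtain ⟨t, h3, h4⟩ := (h.cle_btm_iff d c).1 hle
    have e1 := h.pr_btm_period d (-t)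
    rw [← e1]
    have h3' : A c ≤ A (d + -t * ((m + l : ℕ) : ℤ)) := by
      rw [h.period] at h3 ⊢; linarith
    have h4' : A c + c ≤ A (d + -t * ((m + l : ℕ) : ℤ)) + (d + -t * ((m + l : ℕ) : ℤ)) := by
      rw [h.period] at h4 ⊢; linarith
    clear h3 h4 e1
    generalize d + -t * ((m + l : ℕ) : ℤ) = e at *
    obtain rfl : e = c := by
      rcases lt_trichotomy e c with hlt | heq | hlt
      · have := h.mono (show e ≤ c - 1 by omega)
        simp only at this
        omega
      · exact heq
      · have := h.anti (show c + 1 ≤ e by omega)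
        omega
    rfl

lemma aC_eq (h : IsProfile m l θ A) (hm : 1 ≤ m) (hl : 1 ≤ l) (c : ℤ) :
    aC m l θ (c : ZMod (m + l)) = ((A (c - 1) - A c - (A c - A (c + 1)) : ℤ) : ℚ) := by
  have hc1 := h.succ_le c
  have hc2 := h.le_succ c
  have hd1 := h.succ_le (c - 1)
  have hd2 := h.le_succ (c - 1)
  rw [sub_add_cancel] at hd1 hd2
  unfold aC
  simp only [h.isBottomCell_iff hm hl, exists_eq_left, h.mem_btmMax_iff hm hl,
    h.mem_btmMin_iff hm hl]
  split_ifs with h1 h2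
  · rw [show A (c - 1) - A c - (A c - A (c + 1)) = 1 by omega]; norm_num
  · rw [show A (c - 1) - A c - (A c - A (c + 1)) = -1 by omega]; norm_num
  · rw [show A (c - 1) - A c - (A c - A (c + 1)) = 0 by omega]; norm_num

/-- The coefficients of `P_θ` are the differences of the descents of the profile, so the pairing
with an interval root telescopes. -/
lemma pairP_rt (h : IsProfile m l θ A) (hm : 1 ≤ m) (hl : 1 ≤ l) (i j : ℤ) :
    pairP m l θ (rt (m + l) i j) = ((A i - A (i + 1) - (A j - A (j + 1)) : ℤ) : ℚ) := by
  have : NeZero (m + l) := ⟨by omega⟩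
  have key := eq_of_step (fun n : ℤ => (∑ r, aC m l θ r * cnt (m + l) n r) +
    ((A n - A (n + 1) : ℤ) : ℚ)) (fun n => by
      simp only [cnt_add_one, Pi.add_apply, Pi.single_apply, mul_add, Finset.sum_add_distrib,
        mul_ite, mul_one, mul_zero, Finset.sum_ite_eq', Finset.mem_univ, if_true,
        h.aC_eq hm hl, add_sub_cancel_right]
      push_cast
      ring) i j
  rw [pairP, finsum_eq_sum_of_fintype]
  simp only [rt, Pi.sub_apply, mul_sub, Finset.sum_sub_distrib]
  push_cast at key ⊢
  linarith

end IsProfile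

/-! ### The bijection -/

/-- Theorem 2.7: x ↦ hk(x) is a bijection from θ onto
D(P_θ) = {α ∈ R₊ : ⟨P_θ, α^∨⟩ = -1} (in particular each hk(x) is a positive real root). -/
theorem statement_5 (m l : ℕ) (hm : 1 ≤ m) (hl : 1 ≤ l)
    (θ : Set (Cyl m l)) (hθ : IsCylindric m l θ) :
    Set.BijOn (hk m l θ) θ (DSet m l θ) := by
  have : NeZero (m + l) := ⟨by omega⟩
  obtain ⟨A, h⟩ := exists_profile m l θ hθ
  -- descents of the profile are periodic, so they separate residues mod `κ`
  have hsep : ∀ i j : ℤ, A i - A (i + 1) ≠ A j - A (j + 1) →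
      (i : ZMod (m + l)) ≠ (j : ZMod (m + l)) := by
    intro i j hne e
    rw [ZMod.intCast_eq_intCast_iff_dvd_sub] at e
    obtain ⟨t, ht⟩ := e
    obtain rfl : j = i + t * ((m + l : ℕ) : ℤ) := by linarith
    rw [add_right_comm, h.period, h.period] at hne
    exact hne (by ring)
  refine ⟨?_, ?_, ?_⟩
  · intro x hx
    obtain ⟨a, b, rfl⟩ := exists_pr m l x
    obtain ⟨p, hp, hp'⟩ := h.exists_row hm a
    obtain ⟨q, hq, hq'⟩ := h.exists_col hl b
    obtain ⟨hqp, e⟩ := h.hk_eq hm hl hp hp' hq hq' hx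
    rw [e]
    refine ⟨(mem_Rpos_iff _ (by omega) _).2 ⟨q - 1, p, by omega, ?_, rfl⟩, ?_⟩
    · apply hsep
      rw [sub_add_cancel]
      omega
    · rw [h.pairP_rt hm hl, sub_add_cancel, hp, hp', hq']
      push_cast
      ring
  · intro x hx x' hx' e
    obtain ⟨a, b, rfl⟩ := exists_pr m l x
    obtain ⟨p, hp, hp'⟩ := h.exists_row hm a
    obtain ⟨q, hq, hq'⟩ := h.exists_col hl b
    obtain ⟨a', b', rfl⟩ := exists_pr m l x'
    obtain ⟨u, hu, hu'⟩ := h.exists_row hm a'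
    obtain ⟨v, hv, hv'⟩ := h.exists_col hl b'
    rw [(h.hk_eq hm hl hp hp' hq hq' hx).2, (h.hk_eq hm hl hu hu' hv hv' hx').2] at e
    obtain ⟨t, h1, h2⟩ := rt_inj (m + l) (hsep _ _ (by rw [sub_add_cancel]; omega)) e
    obtain rfl : v = q + t * ((m + l : ℕ) : ℤ) := by linarith
    subst h2
    rw [h.period] at hu hv
    refine (pr_eq_iff m l _ _ _ _).2 ⟨-t, by linarith, ?_⟩
    push_cast at hv
    linarith
  · rintro β ⟨hβ, hpair⟩
    obtain ⟨i, j, hij, -, rfl⟩ := (mem_Rpos_iff _ (by omega) _).1 hβ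
    rw [h.pairP_rt hm hl] at hpair
    have hpair' : A i - A (i + 1) - (A j - A (j + 1)) = -1 := by exact_mod_cast hpair
    have hi1 := h.succ_le i
    have hi2 := h.le_succ i
    have hj1 := h.succ_le j
    have hj2 := h.le_succ j
    -- the cell in the row ending at content `j` and the column ending at content `i + 1`
    have hx : pr m l (A j, A (i + 1) + (i + 1)) ∈ θ := by
      rw [h.mem]
      have h1 := h.mono (show i + 1 ≤ j by omega)
      simp only at h1
      exact h.anti (by omega)
    refine ⟨_, hx, ?_⟩
    have := (h.hk_eq hm hl (p := j) (q := i + 1) rfl (by omega) rfl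
      (by rw [add_sub_cancel_right]; omega) hx).2
    rwa [add_sub_cancel_right] at this

end CylPaper
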